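/- Let F_y be the maximal isotropic flag (e_l ⊂ e_1 ⊂ e_2 ⊂ ⋯ ⊂ e_{l-1}) in ℂ^{2l}. Then the stabilizer of F_y in K, namely {g ∈ K : g·F_y = F_y}, equals B_{2l-2} := {g ∈ SO(2l) : g e_l = e_l, g e_{-l} = e_{-l}, and the matrix of g with respect to the ordered basis (e_1,…,e_l,e_{-l},…,e_{-1}) is upper triangular} (B_{2l-2} is a Borel subgroup of the copy of SO(2l-2) inside K). -/

import Mathlib

open Module Submodule

noncomputable section

/-- `stdVec n m` is the `m`-th standard basis vector of `ℂ^n` (1-indexed); `0` out of range. -/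
def stdVec (n m : ℕ) : Fin n → ℂ :=
  if h : 1 ≤ m ∧ m ≤ n then Pi.single (⟨m - 1, by omega⟩ : Fin n) 1 else 0

/-- `stdSub n k` is the subspace `U_k = span(e_1, …, e_k)` of `ℂ^n`. -/
def stdSub (n k : ℕ) : Submodule ℂ (Fin n → ℂ) :=
  span ℂ (stdVec n '' Set.Icc 1 k)

/-- The action of an invertible linear map of `ℂ^n` on a chain of subspaces. -/
def actFlag (n : ℕ) (g : (Fin n → ℂ) ≃ₗ[ℂ] (Fin n → ℂ))
    (V : ℕ → Submodule ℂ (Fin n → ℂ)) (k : ℕ) : Submodule ℂ (Fin n → ℂ) :=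
  Submodule.map g.toLinearMap (V k)

/-- The orbit of the chain `V` under a set `B` of invertible linear maps. -/
def orbitOf (n : ℕ) (B : Set ((Fin n → ℂ) ≃ₗ[ℂ] (Fin n → ℂ)))
    (V : ℕ → Submodule ℂ (Fin n → ℂ)) : Set (ℕ → Submodule ℂ (Fin n → ℂ)) :=
  {V' | ∃ b ∈ B, actFlag n b V = V'}

/-- The symmetric bilinear form `β(x,y) = ∑_{k=1}^n x_k y_{n+1-k}` on `ℂ^n`. -/
def betaF (n : ℕ) (x y : Fin n → ℂ) : ℂ := ∑ k : Fin n, x k * y k.rev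

/-- `SO(n,ℂ)` for the form `β`. -/
def SOgrp (n : ℕ) : Set ((Fin n → ℂ) ≃ₗ[ℂ] (Fin n → ℂ)) :=
  {g | LinearMap.det g.toLinearMap = 1 ∧ ∀ x y, betaF n (g x) (g y) = betaF n x y}

/-- A maximal isotropic flag `V 1 ⊂ ⋯ ⊂ V l` in `ℂ^n` (values pinned outside `1..l`
so that two flags are equal iff they agree in degrees `1, …, l`). -/
def IsIsoFlag (n l : ℕ) (V : ℕ → Submodule ℂ (Fin n → ℂ)) : Prop :=
  (∀ i, i ≤ l → finrank ℂ ↥(V i) = i) ∧ (∀ i, V i ≤ V (i + 1)) ∧ (∀ i, l ≤ i → V i = V l) ∧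
    (∀ u ∈ V l, ∀ w ∈ V l, betaF n u w = 0)

/-- The isotropic flag `(v 1 ⊂ ⋯ ⊂ v l)` spanned by `v 1, …, v l`. -/
def isoFlagOf (n l : ℕ) (v : ℕ → Fin n → ℂ) (k : ℕ) : Submodule ℂ (Fin n → ℂ) :=
  span ℂ (v '' Set.Icc 1 (min k l))

/-- `K = {g ∈ SO(2l) : g (e_l - e_{-l}) = e_l - e_{-l}}` (here `e_{-l} = e_{l+1}`),
a copy of `SO(2l-1)`. -/
def Keven (l : ℕ) : Set ((Fin (2 * l) → ℂ) ≃ₗ[ℂ] (Fin (2 * l) → ℂ)) :=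
  {g | g ∈ SOgrp (2 * l) ∧
       g (stdVec (2 * l) l - stdVec (2 * l) (l + 1)) =
         stdVec (2 * l) l - stdVec (2 * l) (l + 1)}

/-- `V'` lies in the `K`-orbit of `V`. -/
def InKEvenOrbit (l : ℕ) (V V' : ℕ → Submodule ℂ (Fin (2 * l) → ℂ)) : Prop :=
  ∃ g ∈ Keven l, actFlag (2 * l) g V = V'

/-- The maximal isotropic flag `F_y = (e_l ⊂ e_1 ⊂ e_2 ⊂ ⋯ ⊂ e_{l-1})` in `ℂ^{2l}`. -/
def FyEvenVec (l m : ℕ) : Fin (2 * l) → ℂ :=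
  if m = 1 then stdVec (2 * l) l else stdVec (2 * l) (m - 1)

def FyEvenFlag (l : ℕ) : ℕ → Submodule ℂ (Fin (2 * l) → ℂ) :=
  isoFlagOf (2 * l) l (FyEvenVec l)

/-- `B_{2l-2}`: elements of `SO(2l)` fixing `e_l` and `e_{-l}` whose matrix in the ordered
basis `(e_1, …, e_l, e_{-l}, …, e_{-1})` (the standard ordered basis) is upper triangular;
a Borel subgroup of the copy of `SO(2l-2)` inside `K`. -/
def BEvenSmall (l : ℕ) : Set ((Fin (2 * l) → ℂ) ≃ₗ[ℂ] (Fin (2 * l) → ℂ)) :=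
  {g | g ∈ SOgrp (2 * l) ∧
       g (stdVec (2 * l) l) = stdVec (2 * l) l ∧
       g (stdVec (2 * l) (l + 1)) = stdVec (2 * l) (l + 1) ∧
       ∀ m, 1 ≤ m → m ≤ 2 * l → g (stdVec (2 * l) m) ∈ stdSub (2 * l) m}

theorem mem_span_stdVec {n : ℕ} (S : Set ℕ) (x : Fin n → ℂ) :
    x ∈ span ℂ (stdVec n '' S) ↔ ∀ i : Fin n, (i : ℕ) + 1 ∉ S → x i = 0 := by
  constructor
  · intro h i hi
    induction h using Submodule.span_induction with
    | mem y hy =>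
      obtain ⟨m, hm, rfl⟩ := hy
      unfold stdVec
      split_ifs with h
      · rw [Pi.single_apply, if_neg]
        rintro rfl
        apply hi
        have : m - 1 + 1 = m := by omega
        simpa [this] using hm
      · rfl
    | zero => rfl
    | add y z _ _ hy hz => simp [hy, hz]
    | smul c y _ hy => simp [hy]
  · intro h
    have hx : x = ∑ i : Fin n, x i • stdVec n (i + 1) := by
      conv_lhs => rw [← Finset.univ_sum_single x]
      refine Finset.sum_congr rfl fun i _ => ?_
      have : stdVec n (i + 1) = Pi.single i 1 := by
        unfold stdVec
        rw [dif_pos ⟨by omega, by omega⟩]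
        congr 1
      rw [this]
      ext j
      simp [Pi.single_apply]
    rw [hx]
    refine Submodule.sum_mem _ fun i _ => ?_
    by_cases hi : (i : ℕ) + 1 ∈ S
    · exact Submodule.smul_mem _ _ (Submodule.subset_span ⟨_, hi, rfl⟩)
    · rw [h i hi]; simp

theorem stdVec_eq {n m : ℕ} (h1 : 1 ≤ m) (h2 : m ≤ n) :
    stdVec n m = Pi.single (⟨m - 1, by omega⟩ : Fin n) 1 := by
  unfold stdVec
  rw [dif_pos ⟨h1, h2⟩]

theorem beta_right {n m : ℕ} (h1 : 1 ≤ m) (h2 : m ≤ n) (x : Fin n → ℂ) :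
    betaF n x (stdVec n m) = x ⟨n - m, by omega⟩ := by
  rw [stdVec_eq h1 h2]
  unfold betaF
  rw [Finset.sum_eq_single (⟨n - m, by omega⟩ : Fin n)]
  · rw [Pi.single_apply, if_pos, mul_one]
    ext; simp only [Fin.val_rev]; omega
  · intro b _ hb
    rw [Pi.single_apply, if_neg, mul_zero]
    intro h
    apply hb
    have := congrArg Fin.val h
    simp only [Fin.val_rev] at this
    ext
    show (b : ℕ) = n - m
    omega
  · simp

theorem beta_left {n m : ℕ} (h1 : 1 ≤ m) (h2 : m ≤ n) (x : Fin n → ℂ) :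
    betaF n (stdVec n m) x = x ⟨n - m, by omega⟩ := by
  rw [← beta_right h1 h2 x]
  unfold betaF
  rw [← Equiv.sum_comp Fin.revPerm]
  refine Finset.sum_congr rfl fun i _ => ?_
  simp [mul_comm]

theorem Fy_eq (l k : ℕ) (hl : 2 ≤ l) (hk : 1 ≤ k) :
    FyEvenFlag l k = span ℂ (stdVec (2 * l) '' {m | m = l ∨ (1 ≤ m ∧ m + 1 ≤ min k l)}) := by
  unfold FyEvenFlag isoFlagOf
  congr 1
  ext x
  constructor
  · rintro ⟨m, ⟨h1, h2⟩, rfl⟩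
    unfold FyEvenVec
    split_ifs with h
    · exact ⟨l, Or.inl rfl, rfl⟩
    · exact ⟨m - 1, Or.inr ⟨by omega, by omega⟩, rfl⟩
  · rintro ⟨m, hm | ⟨h1, h2⟩, rfl⟩
    · exact ⟨1, ⟨le_rfl, by omega⟩, by simp [FyEvenVec, hm]⟩
    · exact ⟨m + 1, ⟨by omega, h2⟩, by simp [FyEvenVec]; omega⟩

theorem mem_Fy (l k : ℕ) (hl : 2 ≤ l) (hk : 1 ≤ k) (x : Fin (2 * l) → ℂ) :
    x ∈ FyEvenFlag l k ↔ ∀ i : Fin (2 * l), (i : ℕ) + 1 ≠ l → min k l ≤ (i : ℕ) + 1 → x i = 0 := by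
  rw [Fy_eq l k hl hk, mem_span_stdVec]
  refine forall_congr' fun i => ?_
  simp only [Set.mem_ofPred_eq]
  constructor
  · intro h h1 h2; exact h (by omega)
  · intro h h1; exact h (by omega) (by omega)

theorem mem_stdSub (n k : ℕ) (x : Fin n → ℂ) :
    x ∈ stdSub n k ↔ ∀ i : Fin n, k ≤ (i : ℕ) → x i = 0 := by
  unfold stdSub
  rw [mem_span_stdVec]
  refine forall_congr' fun i => ?_
  simp only [Set.mem_Icc]
  constructor
  · intro h h1; exact h (by omega)
  · intro h h1; exact h (by omega)

theorem stdVec_apply_ne {n m : ℕ} (i : Fin n) (h : (i : ℕ) + 1 ≠ m) : stdVec n m i = 0 := by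
  unfold stdVec
  split_ifs with h1
  · rw [Pi.single_apply, if_neg]
    rintro rfl
    apply h
    show m - 1 + 1 = m
    omega
  · rfl

theorem stdVec_apply_eq {n m : ℕ} (i : Fin n) (h : (i : ℕ) + 1 = m) : stdVec n m i = 1 := by
  rw [stdVec_eq (by omega) (by omega), Pi.single_apply, if_pos]
  ext
  show (i : ℕ) = m - 1
  omega

/-- The stabilizer of `F_y` in `K` is the Borel subgroup `B_{2l-2}`. -/
theorem stmt_8 (l : ℕ) (hl : 2 ≤ l) :
    {g | g ∈ Keven l ∧ actFlag (2 * l) g (FyEvenFlag l) = FyEvenFlag l} = BEvenSmall l := by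
  ext g
  constructor
  · rintro ⟨⟨hSO, hK⟩, hF⟩
    have hst : ∀ k, Submodule.map g.toLinearMap (FyEvenFlag l k) = FyEvenFlag l k :=
      fun k => congrFun hF k
    have hmem : ∀ k x, x ∈ FyEvenFlag l k → g x ∈ FyEvenFlag l k := by
      intro k x hx
      rw [← hst k]
      exact ⟨x, hx, rfl⟩
    have hb := hSO.2
    have e1 : g (stdVec (2 * l) l) ∈ FyEvenFlag l 1 := by
      apply hmem
      rw [mem_Fy l 1 hl le_rfl]
      intro i hi _
      exact stdVec_apply_ne i hi
    have e2 : ∃ a : ℂ, g (stdVec (2 * l) l) = a • stdVec (2 * l) l := by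
      refine ⟨g (stdVec (2 * l) l) ⟨l - 1, by omega⟩, ?_⟩
      rw [mem_Fy l 1 hl le_rfl] at e1
      ext i
      by_cases hi : (i : ℕ) + 1 = l
      · rw [Pi.smul_apply, stdVec_apply_eq i hi, smul_eq_mul, mul_one]
        refine congrArg _ (Fin.ext ?_)
        show (i : ℕ) = l - 1
        omega
      · rw [Pi.smul_apply, stdVec_apply_ne i hi, smul_zero]
        exact e1 i hi (by omega)
    obtain ⟨a, ha⟩ := e2
    have e3 : g (stdVec (2 * l) (l + 1)) = stdVec (2 * l) (l + 1) + (a - 1) • stdVec (2 * l) l := by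
      rw [map_sub, ha] at hK
      have : g (stdVec (2 * l) (l + 1)) =
          a • stdVec (2 * l) l - (stdVec (2 * l) l - stdVec (2 * l) (l + 1)) := by
        rw [← hK]; abel
      rw [this, sub_smul, one_smul]; abel
    have ha1 : a = 1 := by
      have h := hb (stdVec (2 * l) (l + 1)) (stdVec (2 * l) l)
      have hx := hb (stdVec (2 * l) l) (stdVec (2 * l) (l + 1))
      rw [ha, e3] at hx
      have h2 := hb (stdVec (2 * l) (l + 1)) (stdVec (2 * l) (l + 1))
      rw [beta_right (by omega) (by omega),
        stdVec_apply_ne _ (by show 2 * l - (l + 1) + 1 ≠ l + 1; omega), e3] at h2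
      have hadd : ∀ x y z : Fin (2 * l) → ℂ, ∀ c : ℂ,
          betaF (2 * l) z (x + c • y) = betaF (2 * l) z x + c * betaF (2 * l) z y := by
        intro x y z c
        simp only [betaF, Finset.mul_sum, ← Finset.sum_add_distrib]
        refine Finset.sum_congr rfl fun i _ => ?_
        simp only [Pi.add_apply, Pi.smul_apply, smul_eq_mul]
        ring
      rw [hadd, beta_right (by omega) (by omega), beta_right (by omega) (by omega)] at h2
      simp only [Pi.add_apply, Pi.smul_apply, smul_eq_mul] at h2
      rw [stdVec_apply_ne (m := l + 1) _ (by show 2 * l - (l + 1) + 1 ≠ l + 1; omega),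
        stdVec_apply_eq (m := l) _ (by show 2 * l - (l + 1) + 1 = l; omega),
        stdVec_apply_eq (m := l + 1) _ (by show 2 * l - l + 1 = l + 1; omega),
        stdVec_apply_ne (m := l) _ (by show 2 * l - l + 1 ≠ l; omega)] at h2
      linear_combination h2 / 2
    subst ha1
    rw [one_smul] at ha
    rw [sub_self, zero_smul, add_zero] at e3
    refine ⟨hSO, ha, e3, ?_⟩
    intro m hm1 hm2
    rw [mem_stdSub]
    intro i hi
    rcases lt_trichotomy m l with hml | rfl | hml
    · -- m < l
      by_cases hil : (i : ℕ) + 1 = l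
      · have h := hb (stdVec (2 * l) m) (stdVec (2 * l) (l + 1))
        rw [e3, beta_right (by omega) (by omega), beta_right (by omega) (by omega),
          stdVec_apply_ne _ (by show 2 * l - (l + 1) + 1 ≠ m; omega)] at h
        rw [← h]
        refine congrArg _ (Fin.ext ?_)
        show (i : ℕ) = 2 * l - (l + 1)
        omega
      · have h : g (stdVec (2 * l) m) ∈ FyEvenFlag l (m + 1) := by
          apply hmem
          rw [mem_Fy l _ hl (by omega)]
          intro j _ hj
          exact stdVec_apply_ne j (by omega)
        rw [mem_Fy l _ hl (by omega)] at h
        exact h i hil (by omega)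
    · rw [ha]
      exact stdVec_apply_ne i (by omega)
    · by_cases hml' : m = l + 1
      · rw [hml', e3]
        exact stdVec_apply_ne i (by omega)
      · have hi2 := i.2
        have h : stdVec (2 * l) (2 * l - i) ∈ FyEvenFlag l (2 * l - i + 1) := by
          rw [mem_Fy l _ hl (by omega)]
          intro j _ hj
          exact stdVec_apply_ne j (by omega)
        rw [← hst] at h
        obtain ⟨u, hu, hgu⟩ := h
        have hgu' : g u = stdVec (2 * l) (2 * l - i) := hgu
        have h := hb (stdVec (2 * l) m) u
        rw [hgu', beta_right (by omega) (by omega), beta_left (by omega) (by omega)] at h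
        have hu' := (mem_Fy l _ hl (by omega) u).1 hu ⟨2 * l - m, by omega⟩
          (by show 2 * l - m + 1 ≠ l; omega)
          (by show min (2 * l - i + 1) l ≤ 2 * l - m + 1; omega)
        rw [hu'] at h
        rw [← h]
        refine congrArg _ (Fin.ext ?_)
        show (i : ℕ) = 2 * l - (2 * l - i)
        omega
  · rintro ⟨hSO, h1, h2, h3⟩
    refine ⟨⟨hSO, by rw [map_sub, h1, h2]⟩, ?_⟩
    funext k
    show Submodule.map g.toLinearMap (FyEvenFlag l k) = FyEvenFlag l k
    rcases Nat.eq_zero_or_pos k with rfl | hk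
    · have : FyEvenFlag l 0 = ⊥ := by simp [FyEvenFlag, isoFlagOf]
      rw [this, Submodule.map_bot]
    · apply Submodule.eq_of_le_of_finrank_eq
      · rw [Submodule.map_le_iff_le_comap]
        conv_lhs => rw [Fy_eq l k hl hk]
        rw [Submodule.span_le]
        rintro _ ⟨m, hm, rfl⟩
        show g (stdVec (2 * l) m) ∈ FyEvenFlag l k
        rw [mem_Fy l k hl hk]
        intro i hi hki
        rcases hm with rfl | ⟨hm1, hm2⟩
        · rw [h1]; exact stdVec_apply_ne i hi
        · exact (mem_stdSub _ _ _).1 (h3 m hm1 (by omega)) i (by omega)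
      · exact LinearEquiv.finrank_map_eq g _
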